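/- Let n ≥ 9 be an integer and suppose w_1, w_2, w_3, w_4 ∈ ℂ are the roots (with multiplicity) of 16X⁴ − 8X³ − 24X² − 1, i.e. 16X⁴ − 8X³ − 24X² − 1 = 16(X − w_1)(X − w_2)(X − w_3)(X − w_4). Then τ(GP(n,4)) = (−1)^{n−1} · n · ∏_{s=1}^{4} (T_n(w_s) − 1)/(w_s − 1), as an equality in ℂ with τ(GP(n,4)) cast to ℂ. -/

import Mathlib

open Polynomial

/-- The defining relation for the generalized Petersen graph `GP(n,k)`:
`u_i ~ u_{i+1}`, `u_i ~ v_i`, `v_i ~ v_{i+k}` (indices mod `n`);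
`Sum.inl i` is the outer vertex `u_i`, `Sum.inr i` the inner vertex `v_i`. -/
def gpRel (n k : ℕ) : (ZMod n ⊕ ZMod n) → (ZMod n ⊕ ZMod n) → Prop
  | Sum.inl i, Sum.inl j => j = i + 1
  | Sum.inl i, Sum.inr j => j = i
  | Sum.inr _, Sum.inl _ => False
  | Sum.inr i, Sum.inr j => j = i + (k : ZMod n)

instance (n k : ℕ) : DecidableRel (gpRel n k) := fun a b =>
  match a, b with
  | Sum.inl i, Sum.inl j => inferInstanceAs (Decidable (j = i + 1))
  | Sum.inl i, Sum.inr j => inferInstanceAs (Decidable (j = i))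
  | Sum.inr _, Sum.inl _ => inferInstanceAs (Decidable False)
  | Sum.inr i, Sum.inr j => inferInstanceAs (Decidable (j = i + (k : ZMod n)))

/-- The generalized Petersen graph `GP(n,k)`. -/
def genPetersen (n k : ℕ) : SimpleGraph (ZMod n ⊕ ZMod n) :=
  SimpleGraph.fromRel (gpRel n k)

instance (n k : ℕ) : DecidableRel (genPetersen n k).Adj := fun a b =>
  inferInstanceAs (Decidable (a ≠ b ∧ (gpRel n k a b ∨ gpRel n k b a)))

/-- The number of spanning trees of a graph `G`: the number of subgraphs that
contain all vertices and are trees. -/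
noncomputable def numSpanningTrees {V : Type*} (G : SimpleGraph V) : ℕ :=
  Nat.card {H : G.Subgraph // H.IsSpanning ∧ H.coe.IsTree}

/-!
By the matrix-tree theorem, the coefficient of `X` in the characteristic polynomial of the
Laplacian is, up to sign, the number of vertices times the number of spanning trees. To see this,
expand a principal minor by multilinearity in its rows: the terms are indexed by the maps that
send each vertex of the minor to a neighbour, and a term is `1` if following the map never loops
and `0` otherwise. The loop-free maps on all vertices but one are the rooted spanning trees.

The Laplacian of `GP(n,k)` consists of four circulant blocks, which the discrete Fourier transform
diagonalizes simultaneously. Hence `n * τ = ∏ P (c j)` over `0 ≠ j : ZMod n`, where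
`c j = cos (2 * π * j / n)` and `P x = (3 - 2 * x) * (3 - 2 * T_k x) - 1`. As `P` vanishes at `1`,
it factors as `P x = 2 ^ (k + 1) * (x - 1) * ∏ (x - w s)`. The product over `j` then follows from
`T_n x - 1 = (x - 1) * ∏ 2 * (x - c j)`, evaluated at each root `w s` and differentiated at the
root `1`, where it yields `n ^ 2`. Over a field other than `ℂ`, `c j` is replaced by the average
of the values of a primitive additive character at `j` and `-j`.
-/

section MatrixTree

open scoped Matrix

variable {V R : Type*} {s : Finset V}

/-- The relation "`u` is the parent of `v`" of a parent map `f`. The vertices outside `s` are the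
roots, and `f` encodes a rooted forest exactly when this relation is well-founded. -/
def parentRel (f : s → V) (u v : V) : Prop :=
  ∃ hv : v ∈ s, f ⟨v, hv⟩ = u

lemma parentRel_apply (f : s → V) (i : s) : parentRel f (f i) i :=
  ⟨i.2, rfl⟩

lemma acc_parentRel_of_notMem (f : s → V) {v : V} (hv : v ∉ s) : Acc (parentRel f) v :=
  ⟨v, fun _ ⟨h, _⟩ => absurd h hv⟩

lemma acc_parentRel_iff (f : s → V) (i : s) :
    Acc (parentRel f) i ↔ Acc (parentRel f) (f i) :=
  ⟨fun h => h.inv (parentRel_apply f i), fun h => ⟨_, fun _ ⟨_, hu⟩ => hu ▸ h⟩⟩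

section Determinant

variable [CommRing R] [DecidableEq V]

/-- The row indexed by `i` and restricted to the columns in `s` that the edge from `i` to `j`
contributes to the Laplacian matrix. -/
def edgeRow (R : Type*) [CommRing R] (s : Finset V) (i j : V) : s → R :=
  fun k => (Pi.single i 1 : V → R) k - (Pi.single j 1 : V → R) k

lemma edgeRow_dotProduct (i : s) (j : V) (x : V → R) (hx : ∀ v ∉ s, x v = 0) :
    edgeRow R s i j ⬝ᵥ (fun k => x k) = x i - x j := by
  have hsum (v : V) : ∑ k : s, (Pi.single v 1 : V → R) k * x k = x v := by
    rw [Finset.sum_coe_sort s fun k => (Pi.single v 1 : V → R) k * x k]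
    by_cases hv : v ∈ s <;> simp [Pi.single_apply, hv, hx]
  simp only [dotProduct, edgeRow, sub_mul, Finset.sum_sub_distrib, hsum]

lemma det_edgeRow_of_wellFounded {f : s → V} (hf : WellFounded (parentRel f)) :
    (Matrix.of fun i : s => edgeRow R s i (f i)).det = 1 := by
  have : IsWellFounded V (parentRel f) := ⟨hf⟩
  let rank := IsWellFounded.rank (parentRel f)
  have hne {i j : s} (hij : rank i ≤ rank j) : (j : V) ≠ f i :=
    fun h => (IsWellFounded.rank_lt_of_rel (parentRel_apply f i)).not_ge (h ▸ hij)
  have htri : (Matrix.of fun i : s => edgeRow R s i (f i)).BlockTriangular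
      (fun i => OrderDual.toDual (rank i)) := by
    intro i j hij
    have hij : rank i < rank j := hij
    have hji : (j : V) ≠ i := fun h => hij.ne (h ▸ rfl)
    simp [edgeRow, hji, hne hij.le]
  rw [htri.det]
  refine Finset.prod_eq_one fun a _ => ?_
  suffices (Matrix.of fun i : s => edgeRow R s i (f i)).toSquareBlock _ a = 1 by
    rw [this, Matrix.det_one]
  ext ⟨i, hi⟩ ⟨j, hj⟩
  have hij : rank i = rank j := hi.trans hj.symm
  simp only [Matrix.toSquareBlock_def, Matrix.of_apply, edgeRow, Pi.single_apply, hne hij.le,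
    if_false, sub_zero, Matrix.one_apply, Subtype.ext_iff, eq_comm]

lemma det_edgeRow_of_not_wellFounded {f : s → V} (hf : ¬ WellFounded (parentRel f)) :
    (Matrix.of fun i : s => edgeRow R s i (f i)).det = 0 := by
  classical
  set M := Matrix.of fun i : s => edgeRow R s i (f i)
  obtain ⟨v, hv⟩ : ∃ v, ¬ Acc (parentRel f) v := by
    by_contra! h
    exact hf ⟨h⟩
  have hvs : v ∈ s := by
    by_contra h
    exact hv (acc_parentRel_of_notMem f h)
  -- A row of `M` vanishes on the indicator of the vertices whose ancestry never reaches a root.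
  let x : V → R := fun u => if Acc (parentRel f) u then 0 else 1
  have hker : M *ᵥ (fun k => x k) = 0 := by
    ext i
    have hx : ∀ u ∉ s, x u = 0 := fun u hu => if_pos (acc_parentRel_of_notMem f hu)
    exact (edgeRow_dotProduct i (f i) x hx).trans (by simp [x, acc_parentRel_iff f i])
  have hdet : M.det • (fun k : s => x k) = 0 := by
    rw [← Matrix.one_mulVec (fun k : s => x k), ← Matrix.smul_mulVec, ← Matrix.adjugate_mul,
      ← Matrix.mulVec_mulVec, hker, Matrix.mulVec_zero]
  simpa [x, hv] using congrFun hdet ⟨v, hvs⟩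

variable [Fintype V] (G : SimpleGraph V) [DecidableRel G.Adj]

lemma submatrix_lapMatrix_eq_sum_edgeRow (s : Finset V) :
    (G.lapMatrix R).submatrix (Subtype.val : s → V) (Subtype.val : s → V) =
      Matrix.of fun i : s => ∑ j ∈ G.neighborFinset i, edgeRow R s i j := by
  ext i k
  simp [edgeRow, SimpleGraph.lapMatrix, SimpleGraph.degMatrix, SimpleGraph.adjMatrix_apply,
    Matrix.diagonal_apply, Pi.single_apply, Matrix.sub_apply, Finset.sum_sub_distrib,
    Finset.sum_apply, eq_comm]

theorem det_submatrix_lapMatrix (s : Finset V) :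
    ((G.lapMatrix R).submatrix (Subtype.val : s → V) (Subtype.val : s → V)).det =
      Nat.card {f : s → V // (∀ i : s, G.Adj i (f i)) ∧ WellFounded (parentRel f)} := by
  classical
  have hexpand : (Matrix.of fun i : s => ∑ j ∈ G.neighborFinset i, edgeRow R s i j).det =
      ∑ f ∈ Fintype.piFinset fun i : s => G.neighborFinset i,
        (Matrix.of fun i : s => edgeRow R s i (f i)).det :=
    Matrix.detRowAlternating.toMultilinearMap.map_sum_finset _ _
  have hterm (f : s → V) : (Matrix.of fun i : s => edgeRow R s i (f i)).det =
      if WellFounded (parentRel f) then 1 else 0 := by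
    split_ifs with hf
    · exact det_edgeRow_of_wellFounded hf
    · exact det_edgeRow_of_not_wellFounded hf
  rw [submatrix_lapMatrix_eq_sum_edgeRow, hexpand, Finset.sum_congr rfl fun f _ => hterm f,
    Finset.sum_boole, Nat.card_eq_fintype_card, Fintype.card_subtype]
  congr 2
  ext f
  simp

end Determinant

section ParentGraph

/-- The graph that joins every vertex of `s` to its parent. -/
def parentGraph (f : s → V) : SimpleGraph V :=
  SimpleGraph.fromRel (parentRel f)

variable {f g : s → V} {r : V}

lemma parentGraph_adj_apply (hf : WellFounded (parentRel f)) (i : s) :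
    (parentGraph f).Adj i (f i) := by
  have hne : (i : V) ≠ f i := fun h => by
    have hself : parentRel f i i := by simpa only [← h] using parentRel_apply f i
    exact hf.asymmetric _ _ hself hself
  exact ⟨hne, Or.inr (parentRel_apply f i)⟩

lemma parentGraph_le {G : SimpleGraph V} (hG : ∀ i : s, G.Adj i (f i)) : parentGraph f ≤ G := by
  rintro u v ⟨-, ⟨hv, rfl⟩ | ⟨hu, rfl⟩⟩
  exacts [(hG ⟨v, hv⟩).symm, hG ⟨u, hu⟩]

lemma connected_parentGraph (hs : ∀ v, v ∈ s ↔ v ≠ r) (hf : WellFounded (parentRel f)) :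
    (parentGraph f).Connected := by
  have hreach (v : V) : (parentGraph f).Reachable v r := by
    induction v using hf.induction with
    | _ v ih =>
      by_cases hv : v = r
      · exact hv ▸ .refl v
      · let i : s := ⟨v, (hs v).mpr hv⟩
        exact (parentGraph_adj_apply hf i).reachable.trans (ih _ (parentRel_apply f i))
  have : Nonempty V := ⟨r⟩
  exact .mk fun u v => (hreach u).trans (hreach v).symm

lemma isTree_parentGraph [Finite V] (hs : ∀ v, v ∈ s ↔ v ≠ r)
    (hf : WellFounded (parentRel f)) : (parentGraph f).IsTree := by
  have hconn := connected_parentGraph hs hf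
  refine SimpleGraph.isTree_iff_connected_and_card.mpr
    ⟨hconn, le_antisymm ?_ hconn.card_vert_le_card_edgeSet_add_one⟩
  have hedge : (parentGraph f).edgeSet ⊆ Set.range fun i : s => s((i : V), f i) := by
    intro e he
    induction e with
    | _ u v =>
      rw [SimpleGraph.mem_edgeSet] at he
      obtain ⟨-, ⟨hv, rfl⟩ | ⟨hu, rfl⟩⟩ := he
      exacts [⟨⟨v, hv⟩, Sym2.eq_swap⟩, ⟨⟨u, hu⟩, rfl⟩]
  have hcard : s.card < Nat.card V := by
    have := Fintype.ofFinite V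
    rw [Nat.card_eq_fintype_card]
    exact Finset.card_lt_univ_of_notMem (x := r) fun h => (hs r).mp h rfl
  calc Nat.card (parentGraph f).edgeSet + 1
      ≤ Nat.card (Set.range fun i : s => s((i : V), f i)) + 1 := by
        gcongr
        exact Nat.card_mono (Set.toFinite _) hedge
    _ ≤ Nat.card s + 1 := by
        gcongr
        exact Finite.card_range_le _
    _ ≤ Nat.card V := by
        rw [Nat.card_eq_finsetCard]
        exact hcard

lemma eq_of_parentGraph_eq (hg : WellFounded (parentRel g))
    (h : parentGraph f = parentGraph g) : f = g := by
  suffices ∀ v (hv : v ∈ s), f ⟨v, hv⟩ = g ⟨v, hv⟩ from funext fun i => this i i.2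
  intro v
  induction v using hg.induction with
  | _ v ih =>
    intro hv
    have hadj : (parentGraph f).Adj v (g ⟨v, hv⟩) := h ▸ parentGraph_adj_apply hg ⟨v, hv⟩
    obtain ⟨-, ⟨hp, hfp⟩ | ⟨_, hfv⟩⟩ := hadj
    · have hgp := ih _ (parentRel_apply g ⟨v, hv⟩) hp
      exact absurd (⟨hp, hgp.symm.trans hfp⟩ : parentRel g v (g ⟨v, hv⟩))
        (hg.asymmetric _ _ (parentRel_apply g ⟨v, hv⟩))
    · exact hfv

lemma exists_parentGraph_eq {T : SimpleGraph V} (hs : ∀ v, v ∈ s ↔ v ≠ r) (hT : T.IsTree) :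
    ∃ f : s → V, WellFounded (parentRel f) ∧ parentGraph f = T := by
  have hcloser (i : s) : ∃ j, T.Adj i j ∧ T.dist j r < T.dist i r := by
    obtain ⟨p, hp⟩ := hT.connected.exists_walk_length_eq_dist i r
    cases p with
    | nil => exact absurd rfl ((hs _).mp i.2)
    | cons hadj q => exact ⟨_, hadj, hp ▸ Nat.lt_succ_of_le (SimpleGraph.dist_le q)⟩
  choose f hadj hdist using hcloser
  have hf : WellFounded (parentRel f) :=
    Subrelation.wf (fun ⟨hv, hu⟩ => hu ▸ hdist ⟨_, hv⟩) (measure fun v => T.dist v r).wf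
  have hmin := SimpleGraph.isTree_iff_minimal_connected.mp hT
  exact ⟨f, hf, (parentGraph_le hadj).antisymm
    (hmin.2 (connected_parentGraph hs hf) (parentGraph_le hadj))⟩

end ParentGraph

lemma numSpanningTrees_eq_card_isTree (G : SimpleGraph V) :
    numSpanningTrees G = Nat.card {T : SimpleGraph V // T ≤ G ∧ T.IsTree} :=
  Nat.card_congr
    { toFun := fun H => ⟨H.1.spanningCoe, H.1.spanningCoe_le,
        (H.1.spanningCoeEquivCoeOfSpanning H.2.1).isTree_iff.mpr H.2.2⟩
      invFun := fun T => ⟨SimpleGraph.toSubgraph T.1 T.2.1, SimpleGraph.toSubgraph.isSpanning _ _,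
        (SimpleGraph.Subgraph.spanningCoeEquivCoeOfSpanning _
          (SimpleGraph.toSubgraph.isSpanning _ _)).isTree_iff.mp T.2.2⟩
      left_inv := fun ⟨_, hspan, _⟩ => Subtype.ext <| SimpleGraph.Subgraph.ext
        (SimpleGraph.Subgraph.isSpanning_iff.mp hspan).symm rfl
      right_inv := fun _ => rfl }

variable (G : SimpleGraph V) {r : V}

lemma card_parentMap_eq_numSpanningTrees [Finite V] (hs : ∀ v, v ∈ s ↔ v ≠ r) :
    Nat.card {f : s → V // (∀ i : s, G.Adj i (f i)) ∧ WellFounded (parentRel f)} =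
      numSpanningTrees G := by
  rw [numSpanningTrees_eq_card_isTree]
  refine Nat.card_eq_of_bijective
    (fun f => ⟨parentGraph f.1, parentGraph_le f.2.1, isTree_parentGraph hs f.2.2⟩)
    ⟨fun f g h => Subtype.ext (eq_of_parentGraph_eq g.2.2 (congrArg Subtype.val h)), ?_⟩
  rintro ⟨T, hTG, hT⟩
  obtain ⟨f, hf, rfl⟩ := exists_parentGraph_eq hs hT
  exact ⟨⟨f, fun i => hTG (parentGraph_adj_apply hf i), hf⟩, rfl⟩

variable [CommRing R] [Fintype V] [DecidableEq V] [DecidableRel G.Adj]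

theorem det_submatrix_lapMatrix_eq_numSpanningTrees (hs : ∀ v, v ∈ s ↔ v ≠ r) :
    ((G.lapMatrix R).submatrix (Subtype.val : s → V) (Subtype.val : s → V)).det =
      numSpanningTrees G := by
  rw [det_submatrix_lapMatrix, card_parentMap_eq_numSpanningTrees G hs]

theorem coeff_one_charpoly_lapMatrix [Nonempty V] :
    (G.lapMatrix R).charpoly.coeff 1 =
      (-1) ^ (Fintype.card V - 1) * (Fintype.card V * numSpanningTrees G) := by
  have hpos : 0 < Fintype.card V := Fintype.card_pos
  have hminor : ∀ s ∈ Finset.powersetCard (Fintype.card V - 1) (Finset.univ : Finset V),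
      ((G.lapMatrix R).submatrix (Subtype.val : s → V) (Subtype.val : s → V)).det =
        numSpanningTrees G := by
    intro s hs
    have hcompl : sᶜ.card = 1 := by
      have := (Finset.mem_powersetCard.mp hs).2
      rw [Finset.card_compl]
      omega
    obtain ⟨r, hr⟩ := Finset.card_eq_one.mp hcompl
    exact det_submatrix_lapMatrix_eq_numSpanningTrees G (r := r) fun v => by
      simp [← Finset.mem_singleton, ← hr]
  have h := Matrix.charpoly_coeff_eq_sum_minors (G.lapMatrix R) _ (Nat.sub_le _ 1)
  rw [Nat.sub_sub_self hpos] at h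
  rw [h, Finset.sum_congr rfl hminor, Finset.sum_const, Finset.card_powersetCard, Finset.card_univ,
    Nat.choose_symm hpos, Nat.choose_one_right, nsmul_eq_mul]

end MatrixTree

section BlockCirculant

open Matrix

lemma det_fromBlocks_diagonal {ι R : Type*} [CommRing R] [Fintype ι] [DecidableEq ι]
    (a b c d : ι → R) :
    (fromBlocks (diagonal a) (diagonal b) (diagonal c) (diagonal d)).det =
      ∏ i, (a i * d i - b i * c i) := by
  let e : Fin 2 × ι ≃ ι ⊕ ι :=
    (Equiv.prodCongr finTwoEquiv (Equiv.refl ι)).trans (Equiv.boolProdEquivSum ι)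
  have hblock : (fromBlocks (diagonal a) (diagonal b) (diagonal c) (diagonal d)).submatrix e e =
      blockDiagonal fun i => !![a i, b i; c i, d i] := by
    ext ⟨i, k⟩ ⟨j, l⟩
    fin_cases i <;> fin_cases j <;>
      simp [e, blockDiagonal_apply, diagonal_apply, finTwoEquiv, Equiv.boolProdEquivSum]
  simp only [← det_submatrix_equiv_self e, hblock, det_blockDiagonal, det_fin_two_of]

lemma charpoly_fromBlocks_diagonal {ι R : Type*} [CommRing R] [Fintype ι] [DecidableEq ι]
    (a b c d : ι → R) :
    (fromBlocks (diagonal a) (diagonal b) (diagonal c) (diagonal d)).charpoly =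
      ∏ i, ((X - C (a i)) * (X - C (d i)) - C (b i * c i)) := by
  have hneg (x : ι → R) : -(diagonal x).map C = diagonal fun i => -C (x i) := by
    rw [diagonal_map (map_zero C), diagonal_neg]
  simp only [charpoly, charmatrix_fromBlocks, charmatrix_diagonal, hneg, det_fromBlocks_diagonal,
    neg_mul_neg, C_mul]

lemma charpoly_eq_of_mul_eq_mul {ι R : Type*} [CommRing R] [Fintype ι] [DecidableEq ι]
    {M N F : Matrix ι ι R} (hF : IsUnit F) (h : M * F = F * N) : M.charpoly = N.charpoly := by
  obtain ⟨U, rfl⟩ := hF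
  rw [← charpoly_units_conj U N, ← h, mul_nonsing_inv_cancel_right]
  exact (isUnit_iff_isUnit_det _).mp U.isUnit

variable {A K : Type*} [CommRing A] [Fintype A] [Field K] {ψ : AddChar A K}

/-- The matrix of the discrete Fourier transform with respect to the additive character `ψ`; its
`j`-th column is the character `i ↦ ψ (-(i * j))`. -/
def fourierMatrix (ψ : AddChar A K) : Matrix A A K :=
  of fun i j => ψ (-(i * j))

lemma circulant_mul_fourierMatrix [DecidableEq A] (v : A → K) :
    circulant v * fourierMatrix ψ = fourierMatrix ψ * diagonal fun j => ∑ x, v x * ψ (x * j) := by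
  ext i j
  rw [mul_diagonal, mul_apply, Finset.mul_sum, ← Equiv.sum_comp (Equiv.subLeft i)]
  refine Finset.sum_congr rfl fun x _ => ?_
  have hsplit : ψ (-((i - x) * j)) = ψ (-(i * j)) * ψ (x * j) := by
    rw [← AddChar.map_add_eq_mul]
    ring_nf
  simp only [fourierMatrix, circulant_apply, of_apply, Equiv.subLeft_apply, sub_sub_cancel, hsplit]
  ring

lemma isUnit_fourierMatrix [DecidableEq A] (hψ : ψ.IsPrimitive) (hA : (Fintype.card A : K) ≠ 0) :
    IsUnit (fourierMatrix ψ) := by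
  have hmul : (of fun i j => ψ (i * j)) * fourierMatrix ψ = (Fintype.card A : K) • 1 := by
    ext i j
    have hterm (x : A) : ψ (i * x) * ψ (-(x * j)) = ψ (x * (i - j)) := by
      rw [← AddChar.map_add_eq_mul]
      ring_nf
    simp [mul_apply, fourierMatrix, hterm, AddChar.sum_mulShift _ hψ, sub_eq_zero, one_apply]
  have hinv : ((Fintype.card A : K)⁻¹ • of fun i j => ψ (i * j)) * fourierMatrix ψ = 1 := by
    rw [smul_mul, hmul, inv_smul_smul₀ hA]
  exact (isUnit_iff_isUnit_det _).mpr (isUnit_det_of_left_inverse hinv)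

theorem charpoly_fromBlocks_circulant [DecidableEq A] (hψ : ψ.IsPrimitive)
    (hA : (Fintype.card A : K) ≠ 0) (a b c d : A → K) :
    (fromBlocks (circulant a) (circulant b) (circulant c) (circulant d)).charpoly =
      ∏ j, ((X - C (∑ x, a x * ψ (x * j))) * (X - C (∑ x, d x * ψ (x * j))) -
        C ((∑ x, b x * ψ (x * j)) * ∑ x, c x * ψ (x * j))) := by
  have hF := isUnit_fourierMatrix hψ hA
  rw [← charpoly_fromBlocks_diagonal]
  refine charpoly_eq_of_mul_eq_mul
    (F := fromBlocks (fourierMatrix ψ) 0 0 (fourierMatrix ψ)) ?_ ?_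
  · rw [isUnit_iff_isUnit_det] at hF ⊢
    rw [det_fromBlocks_zero₂₁]
    exact hF.mul hF
  · simp [fromBlocks_multiply, circulant_mul_fourierMatrix]

end BlockCirculant

section Chebyshev

lemma addChar_mul_neg {A M : Type*} [AddGroup A] [Monoid M] (ψ : AddChar A M) (a : A) :
    ψ a * ψ (-a) = 1 := by
  rw [← AddChar.map_add_eq_mul, add_neg_cancel, AddChar.map_zero_eq_one]

lemma chebyshev_T_four (R : Type*) [CommRing R] :
    Chebyshev.T R 4 = 8 * X ^ 4 - 8 * X ^ 2 + 1 := by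
  rw [show (4 : ℤ) = 2 * 2 by norm_num, Chebyshev.T_mul, Chebyshev.T_two]
  simp only [sub_comp, mul_comp, pow_comp, X_comp, ofNat_comp, one_comp]
  ring

variable {K : Type*} [Field K]

lemma two_mul_eval_chebyshev_T {x y : K} (h2 : (2 : K) ≠ 0) (hxy : x * y = 1) (m : ℕ) :
    2 * (Chebyshev.T K m).eval ((x + y) / 2) = x ^ m + y ^ m := by
  have hC := congrArg (eval ((x + y) / 2)) (Chebyshev.C_comp_two_mul_X K m)
  rw [← dickson_one_one_eq_chebyshev_C] at hC
  simpa [mul_div_cancel₀ _ h2, dickson_one_one_eval_add_inv x y hxy, eq_comm] using hC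

variable {n : ℕ} {ψ : AddChar (ZMod n) K}

lemma prod_sub_addChar [NeZero n] (hψ : ψ.IsPrimitive) (x : K) : ∏ j, (x - ψ j) = x ^ n - 1 := by
  have hroot : IsPrimitiveRoot (ψ 1) n := by
    refine IsPrimitiveRoot.iff_def _ _ |>.mpr ⟨?_, fun l hl => ?_⟩
    · rw [← AddChar.map_nsmul_eq_pow, nsmul_one, ZMod.natCast_self, AddChar.map_zero_eq_one]
    · rwa [← AddChar.map_nsmul_eq_pow, nsmul_one, hψ.zmod_char_eq_one_iff,
        ZMod.natCast_eq_zero_iff] at hl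
  have hinj : Function.Injective ψ :=
    AddChar.injective_iff.mpr fun a => (hψ.zmod_char_eq_one_iff n a).mp
  have himage : Finset.univ.map ⟨ψ, hinj⟩ = nthRootsFinset n (1 : K) := by
    refine Finset.eq_of_subset_of_card_le (fun z hz => ?_) ?_
    · obtain ⟨j, -, rfl⟩ := Finset.mem_map.mp hz
      rw [mem_nthRootsFinset (NeZero.pos n), Function.Embedding.coeFn_mk,
        ← AddChar.map_nsmul_eq_pow, nsmul_eq_mul, ZMod.natCast_self, zero_mul,
        AddChar.map_zero_eq_one]
    · simp [hroot.card_nthRootsFinset]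
  have hfactor := congrArg (eval x) (X_pow_sub_one_eq_prod (NeZero.pos n) hroot)
  simpa [← himage, eval_prod, eq_comm] using hfactor

/-- The analogue `(ψ j + ψ (-j)) / 2` of the real part of the root of unity `ψ j`, which makes
sense in every field. Over `ℂ` it is `cos (2 * π * j / n)` if `ψ 1 = exp (2 * π * I / n)`. -/
def charCos (ψ : AddChar (ZMod n) K) (j : ZMod n) : K :=
  (ψ j + ψ (-j)) / 2

variable [CharZero K]

lemma charCos_zero (ψ : AddChar (ZMod n) K) : charCos ψ 0 = 1 := by
  simp [charCos]

lemma eval_chebyshev_T_charCos (ψ : AddChar (ZMod n) K) (j : ZMod n) (k : ℕ) :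
    (Chebyshev.T K k).eval (charCos ψ j) = charCos ψ (k * j) := by
  rw [charCos, charCos, eq_div_iff two_ne_zero, mul_comm,
    two_mul_eval_chebyshev_T two_ne_zero (addChar_mul_neg ψ j),
    ← AddChar.map_nsmul_eq_pow, ← AddChar.map_nsmul_eq_pow, nsmul_eq_mul, nsmul_eq_mul, mul_neg]

lemma eq_of_forall_eval_add_div_two_eq {p q : K[X]}
    (h : ∀ y z : K, y * z = 1 → p.eval ((y + z) / 2) = q.eval ((y + z) / 2)) : p = q := by
  have hne (m : ℕ) : (m + 2 : K) ≠ 0 := by exact_mod_cast (by omega : m + 2 ≠ 0)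
  have hinj : Function.Injective fun m : ℕ => ((m + 2 : K) + (m + 2 : K)⁻¹) / 2 := by
    intro a b hab
    have hmul : ((a : K) - b) * ((a + 2) * (b + 2) - 1) = 0 := by
      have ha := hne a
      have hb := hne b
      field_simp at hab
      linear_combination hab
    have hprod_ne : ((a : K) + 2) * (b + 2) - 1 ≠ 0 := by
      rw [sub_ne_zero]
      exact_mod_cast (by nlinarith : (a + 2) * (b + 2) ≠ 1)
    exact_mod_cast sub_eq_zero.mp ((mul_eq_zero.mp hmul).resolve_right hprod_ne)
  exact eq_of_infinite_eval_eq p q <| Set.infinite_of_injective_forall_mem hinj fun m =>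
    h _ _ (mul_inv_cancel₀ (hne m))

variable [NeZero n]

lemma pow_mul_prod_add_sub_charCos (hψ : ψ.IsPrimitive) {y z : K} (hyz : y * z = 1) :
    y ^ n * ∏ j, (y + z - 2 * charCos ψ j) = (y ^ n - 1) ^ 2 := by
  have hfactor (j : ZMod n) : y * (y + z - 2 * charCos ψ j) = (y - ψ j) * (y - ψ (-j)) := by
    rw [charCos]
    linear_combination hyz - addChar_mul_neg ψ j
  have hneg : ∏ j, (y - ψ (-j)) = ∏ j, (y - ψ j) :=
    Equiv.prod_comp (Equiv.neg (ZMod n)) fun j => y - ψ j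
  calc y ^ n * ∏ j, (y + z - 2 * charCos ψ j)
      = ∏ j, y * (y + z - 2 * charCos ψ j) := by
        rw [Finset.prod_mul_distrib, Finset.prod_const, Finset.card_univ, ZMod.card]
    _ = (y ^ n - 1) ^ 2 := by
        simp only [hfactor, Finset.prod_mul_distrib, hneg, prod_sub_addChar hψ, sq]

theorem X_sub_one_mul_prod_X_sub_charCos (hψ : ψ.IsPrimitive) :
    (X - 1) * ∏ j ∈ Finset.univ.erase (0 : ZMod n), 2 * (X - C (charCos ψ j)) =
      Chebyshev.T K n - 1 := by
  have hprod : ∏ j : ZMod n, 2 * (X - C (charCos ψ j)) = 2 * (Chebyshev.T K n - 1) := by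
    refine eq_of_forall_eval_add_div_two_eq fun y z hyz => ?_
    have hT := two_mul_eval_chebyshev_T two_ne_zero hyz n
    have hpow : y ^ n * z ^ n = 1 := by rw [← mul_pow, hyz, one_pow]
    refine mul_left_cancel₀ (left_ne_zero_of_mul_eq_one hpow) ?_
    simp only [eval_prod, eval_mul, eval_sub, eval_X, eval_C, eval_ofNat, eval_one, mul_sub,
      mul_div_cancel₀ _ (two_ne_zero' K), hT, pow_mul_prod_add_sub_charCos hψ hyz]
    linear_combination -hpow
  rw [← Finset.mul_prod_erase _ _ (Finset.mem_univ 0), charCos_zero, mul_assoc, C_1] at hprod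
  exact mul_left_cancel₀ two_ne_zero hprod

lemma prod_sub_charCos (hψ : ψ.IsPrimitive) {x : K} (hx : x ≠ 1) :
    ∏ j ∈ Finset.univ.erase (0 : ZMod n), 2 * (x - charCos ψ j) =
      ((Chebyshev.T K n).eval x - 1) / (x - 1) := by
  have h := congrArg (eval x) (X_sub_one_mul_prod_X_sub_charCos hψ)
  rw [eq_div_iff (sub_ne_zero.mpr hx), mul_comm]
  simpa [eval_prod] using h

lemma prod_one_sub_charCos (hψ : ψ.IsPrimitive) :
    ∏ j ∈ Finset.univ.erase (0 : ZMod n), 2 * (1 - charCos ψ j) = (n : K) ^ 2 := by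
  have h := congrArg (fun p => (derivative p).eval 1) (X_sub_one_mul_prod_X_sub_charCos hψ)
  simpa [eval_prod, Chebyshev.derivative_T_eval_one] using h

end Chebyshev

section GeneralizedPetersen

open Matrix

variable {n k : ℕ}

lemma zmod_natCast_add_self_ne_zero (hk : 1 ≤ k) (hn : 2 * k < n) : (k : ZMod n) + k ≠ 0 := by
  rw [← Nat.cast_add, Ne, ZMod.natCast_eq_zero_iff]
  exact Nat.not_dvd_of_pos_of_lt (by omega) (by omega)

lemma adjMatrix_circulantGraph_singleton {A R : Type*} [AddGroup A] [DecidableEq A]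
    [NonAssocSemiring R] {a : A} (ha : a + a ≠ 0) :
    (SimpleGraph.circulantGraph {a}).adjMatrix R =
      circulant (Pi.single a 1 + Pi.single (-a) 1) := by
  have ha0 : a ≠ 0 := fun h => ha (by simp [h])
  have hneg : a ≠ -a := fun h => ha (eq_neg_iff_add_eq_zero.mp h)
  ext i j
  have hji : j - i = a ↔ i - j = -a := by rw [← neg_sub i j, neg_eq_iff_eq_neg]
  simp only [SimpleGraph.adjMatrix_apply, SimpleGraph.circulantGraph_adj, Set.mem_singleton_iff,
    hji, circulant_apply, Pi.add_apply, Pi.single_apply, ← sub_ne_zero (a := i)]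
  generalize i - j = d
  rcases eq_or_ne d a with rfl | hda
  · simp [ha0, hneg]
  · rcases eq_or_ne d (-a) with rfl | hdna
    · simp [ha0, hneg.symm]
    · simp [hda, hdna]

lemma adjMatrix_genPetersen {R : Type*} [NonAssocSemiring R] (hk : 1 ≤ k) (hn : 2 * k < n) :
    (genPetersen n k).adjMatrix R =
      fromBlocks (circulant (Pi.single 1 1 + Pi.single (-1) 1)) 1 1
        (circulant (Pi.single (k : ZMod n) 1 + Pi.single (-k : ZMod n) 1)) := by
  have h1 : (1 : ZMod n) + 1 ≠ 0 := by
    simpa using zmod_natCast_add_self_ne_zero (k := 1) le_rfl (by omega)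
  have hadj (x y : ZMod n ⊕ ZMod n) :
      (genPetersen n k).Adj x y ↔ x ≠ y ∧ (gpRel n k x y ∨ gpRel n k y x) := Iff.rfl
  rw [← adjMatrix_circulantGraph_singleton h1,
    ← adjMatrix_circulantGraph_singleton (zmod_natCast_add_self_ne_zero hk hn)]
  ext (i | i) (j | j) <;>
    simp [SimpleGraph.adjMatrix_apply, hadj, gpRel, one_apply, sub_eq_iff_eq_add, or_comm,
      eq_comm, add_comm]

variable [NeZero n]

lemma isRegularOfDegree_genPetersen (hk : 1 ≤ k) (hn : 2 * k < n) :
    (genPetersen n k).IsRegularOfDegree 3 := by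
  have hcirc (s i : ZMod n) :
      ∑ j, circulant (Pi.single s 1 + Pi.single (-s) 1 : ZMod n → ℕ) i j = 2 := by
    refine (Equiv.sum_comp (Equiv.subLeft i)
      (Pi.single s 1 + Pi.single (-s) 1 : ZMod n → ℕ)).trans ?_
    simp [Finset.sum_add_distrib]
  intro x
  have hrow : (genPetersen n k).degree x = ∑ y, (genPetersen n k).adjMatrix ℕ x y := by
    simp only [SimpleGraph.adjMatrix_apply, Finset.sum_boole, Nat.cast_id,
      ← SimpleGraph.neighborFinset_eq_filter, SimpleGraph.card_neighborFinset_eq_degree]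
  rw [hrow, adjMatrix_genPetersen hk hn, Fintype.sum_sum_type]
  rcases x with i | i <;> simp [-circulant_apply, hcirc, one_apply]

lemma lapMatrix_genPetersen {R : Type*} [CommRing R] (hk : 1 ≤ k) (hn : 2 * k < n) :
    (genPetersen n k).lapMatrix R =
      fromBlocks (circulant (Pi.single 0 3 - Pi.single 1 1 - Pi.single (-1) 1))
        (circulant (-Pi.single 0 1)) (circulant (-Pi.single 0 1))
        (circulant (Pi.single 0 3 - Pi.single (k : ZMod n) 1 - Pi.single (-k : ZMod n) 1)) := by
  have hdeg : (genPetersen n k).degMatrix R = fromBlocks (circulant (Pi.single 0 3)) 0 0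
      (circulant (Pi.single 0 3)) := by
    simp [SimpleGraph.degMatrix, (isRegularOfDegree_genPetersen hk hn).degree_eq]
  simp only [SimpleGraph.lapMatrix, hdeg, adjMatrix_genPetersen hk hn, sub_eq_add_neg,
    fromBlocks_neg, fromBlocks_add, circulant_add, circulant_neg, circulant_single_one, neg_add,
    zero_add, add_assoc]

theorem charpoly_lapMatrix_genPetersen {K : Type*} [Field K] [CharZero K] {ψ : AddChar (ZMod n) K}
    (hψ : ψ.IsPrimitive) (hk : 1 ≤ k) (hn : 2 * k < n) :
    ((genPetersen n k).lapMatrix K).charpoly =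
      ∏ j, ((X - C (3 - 2 * charCos ψ j)) *
        (X - C (3 - 2 * (Chebyshev.T K k).eval (charCos ψ j))) - 1) := by
  have hcard : (Fintype.card (ZMod n) : K) ≠ 0 := by
    rw [ZMod.card]
    exact NeZero.ne _
  have hsum (s j : ZMod n) :
      ∑ x, (Pi.single 0 3 - Pi.single s 1 - Pi.single (-s) 1 : ZMod n → K) x * ψ (x * j) =
        3 - 2 * charCos ψ (s * j) := by
    simp [Pi.single_apply, charCos, sub_mul, Finset.sum_sub_distrib, mul_div_cancel₀, ← sub_sub]
  have hone (j : ZMod n) : ∑ x, (-Pi.single 0 1 : ZMod n → K) x * ψ (x * j) = -1 := by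
    simp [Pi.single_apply]
  rw [lapMatrix_genPetersen hk hn, charpoly_fromBlocks_circulant hψ hcard]
  simp only [hsum, hone, one_mul, ← eval_chebyshev_T_charCos, neg_mul_neg, mul_one, C_1]

theorem natCast_mul_numSpanningTrees_genPetersen {K : Type*} [Field K] [CharZero K]
    {ψ : AddChar (ZMod n) K} (hψ : ψ.IsPrimitive) (hk : 1 ≤ k) (hn : 2 * k < n) :
    (n : K) * numSpanningTrees (genPetersen n k) =
      ∏ j ∈ Finset.univ.erase (0 : ZMod n), ((3 - 2 * charCos ψ j) *
        (3 - 2 * (Chebyshev.T K k).eval (charCos ψ j)) - 1) := by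
  let Q : K[X] := ∏ j ∈ Finset.univ.erase (0 : ZMod n), ((X - C (3 - 2 * charCos ψ j)) *
    (X - C (3 - 2 * (Chebyshev.T K k).eval (charCos ψ j))) - 1)
  have hQ : Q.eval 0 = ∏ j ∈ Finset.univ.erase (0 : ZMod n), ((3 - 2 * charCos ψ j) *
      (3 - 2 * (Chebyshev.T K k).eval (charCos ψ j)) - 1) := by
    simp only [Q, eval_prod, eval_sub, eval_mul, eval_X, eval_C, eval_one, zero_sub, neg_mul_neg]
  have hcharpoly : ((genPetersen n k).lapMatrix K).charpoly = X * ((X - 2) * Q) := by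
    have hone : (C (3 - 2 * 1) : K[X]) = 1 := by
      rw [← C_1]
      norm_num
    rw [charpoly_lapMatrix_genPetersen hψ hk hn, ← Finset.mul_prod_erase _ _ (Finset.mem_univ 0),
      charCos_zero, Chebyshev.T_eval_one, hone]
    ring
  have hcoeff := coeff_one_charpoly_lapMatrix (R := K) (genPetersen n k)
  have hodd : Odd (2 * n - 1) := by
    have := NeZero.pos n
    exact ⟨n - 1, by omega⟩
  rw [hcharpoly, coeff_X_mul, coeff_zero_eq_eval_zero, eval_mul, hQ, Fintype.card_sum, ZMod.card,
    ← two_mul, hodd.neg_one_pow] at hcoeff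
  simp only [eval_sub, eval_X, eval_ofNat, Nat.cast_mul, Nat.cast_ofNat] at hcoeff
  linear_combination hcoeff / 2

end GeneralizedPetersen

section SpanningTreeFormula

variable {K : Type*} [Field K]

section Factorization

variable {k : ℕ} {w : Fin k → K}

lemma eval_eq_prod_sub_of_factorization
    (hw : (3 - 2 * X) * (3 - 2 * Chebyshev.T K k) - 1 =
      2 ^ (k + 1) * (X - 1) * ∏ s : Fin k, (X - C (w s))) (x : K) :
    (3 - 2 * x) * (3 - 2 * (Chebyshev.T K k).eval x) - 1 =
      (-1) ^ (k + 1) * (2 * (1 - x)) * ∏ s, 2 * (w s - x) := by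
  have heval := congrArg (eval x) hw
  simp only [eval_sub, eval_mul, eval_ofNat, eval_X, eval_one, eval_pow, eval_prod, eval_C]
    at heval
  have hneg : ∏ s, 2 * (w s - x) = (-2) ^ k * ∏ s, (x - w s) := by
    calc ∏ s, 2 * (w s - x) = ∏ s, -2 * (x - w s) := Finset.prod_congr rfl fun s _ => by ring
      _ = (-2) ^ k * ∏ s, (x - w s) := by
        rw [Finset.prod_mul_distrib, Finset.prod_const, Finset.card_univ, Fintype.card_fin]
  have hsign : (-1) ^ k * (-2 : K) ^ k = 2 ^ k := by rw [← mul_pow]; norm_num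
  rw [heval, hneg]
  linear_combination (2 * (1 - x) * ∏ s, (x - w s)) * hsign

lemma ne_one_of_factorization [CharZero K]
    (hw : (3 - 2 * X) * (3 - 2 * Chebyshev.T K k) - 1 =
      2 ^ (k + 1) * (X - 1) * ∏ s : Fin k, (X - C (w s))) (s : Fin k) : w s ≠ 1 := by
  intro hs
  have hprod : ∏ s : Fin k, (1 - w s) = 0 :=
    Finset.prod_eq_zero (Finset.mem_univ s) (by rw [hs, sub_self])
  have hderiv := congrArg (fun p => (derivative p).eval 1) hw
  have hzero : 2 + 2 * (k : K) ^ 2 = 0 := by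
    simp only [derivative_sub, derivative_mul, derivative_ofNat, derivative_X, derivative_one,
      eval_add, eval_sub, eval_neg, eval_mul, eval_ofNat, eval_X, eval_one, eval_pow, eval_prod,
      eval_C, Chebyshev.T_eval_one, Chebyshev.derivative_T_eval_one, Int.cast_natCast, hprod,
      zero_mul, mul_zero, mul_one, zero_add, add_zero, zero_sub, sub_zero, sub_self, neg_mul,
      mul_neg] at hderiv
    linear_combination -hderiv
  exact absurd hzero (by exact_mod_cast (by positivity : 2 + 2 * k ^ 2 ≠ 0))

end Factorization

theorem natCast_numSpanningTrees_genPetersen_eq_prod_chebyshev [CharZero K] {n k : ℕ} [NeZero n]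
    {ψ : AddChar (ZMod n) K} (hψ : ψ.IsPrimitive) (hk : 1 ≤ k) (hn : 2 * k < n) {w : Fin k → K}
    (hw : (3 - 2 * X) * (3 - 2 * Chebyshev.T K k) - 1 =
      2 ^ (k + 1) * (X - 1) * ∏ s : Fin k, (X - C (w s))) :
    (numSpanningTrees (genPetersen n k) : K) =
      (-1) ^ ((k + 1) * (n - 1)) * n *
        ∏ s : Fin k, ((Chebyshev.T K n).eval (w s) - 1) / (w s - 1) := by
  have hcard : (Finset.univ.erase (0 : ZMod n)).card = n - 1 := by
    rw [Finset.card_erase_of_mem (Finset.mem_univ 0), Finset.card_univ, ZMod.card]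
  refine mul_left_cancel₀ (NeZero.ne (n : K)) ?_
  calc (n : K) * numSpanningTrees (genPetersen n k)
      = ∏ j ∈ Finset.univ.erase (0 : ZMod n), ((-1) ^ (k + 1) * (2 * (1 - charCos ψ j)) *
          ∏ s, 2 * (w s - charCos ψ j)) := by
        rw [natCast_mul_numSpanningTrees_genPetersen hψ hk hn]
        exact Finset.prod_congr rfl fun j _ => eval_eq_prod_sub_of_factorization hw _
    _ = ((-1) ^ (k + 1)) ^ (n - 1) * (n : K) ^ 2 *
          ∏ s, ((Chebyshev.T K n).eval (w s) - 1) / (w s - 1) := by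
        rw [Finset.prod_mul_distrib, Finset.prod_mul_distrib, Finset.prod_const, hcard,
          prod_one_sub_charCos hψ, Finset.prod_comm]
        exact congrArg _ (Finset.prod_congr rfl fun s _ =>
          prod_sub_charCos hψ (ne_one_of_factorization hw s))
    _ = n * ((-1) ^ ((k + 1) * (n - 1)) * n *
          ∏ s, ((Chebyshev.T K n).eval (w s) - 1) / (w s - 1)) := by
        rw [pow_mul]
        ring

theorem spanning_trees_GP4_general [CharZero K] (n k : ℕ) (hk : 1 ≤ k) (hn : 2 * k < n)
    (w : Fin k → K)
    (hw : (3 - 2 * X) * (3 - 2 * Chebyshev.T K k) - 1 =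
      2 ^ (k + 1) * (X - 1) * ∏ s : Fin k, (X - C (w s))) :
    (numSpanningTrees (genPetersen n k) : K) =
      (-1) ^ ((k + 1) * (n - 1)) * n *
        ∏ s : Fin k, ((Chebyshev.T K n).eval (w s) - 1) / (w s - 1) := by
  have : NeZero n := ⟨by omega⟩
  let φ := algebraMap K (AlgebraicClosure K)
  have : CharZero (AlgebraicClosure K) := charZero_of_injective_algebraMap φ.injective
  obtain ⟨ζ, hζ⟩ := HasEnoughRootsOfUnity.exists_primitiveRoot (AlgebraicClosure K) n
  have hψ := AddChar.zmodChar_primitive_of_primitive_root n hζ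
  have hw_map := congrArg (map φ) hw
  simp only [Polynomial.map_sub, Polynomial.map_mul, Polynomial.map_pow, Polynomial.map_prod,
    Polynomial.map_ofNat, Polynomial.map_one, map_X, map_C, Chebyshev.map_T] at hw_map
  apply φ.injective
  have h := natCast_numSpanningTrees_genPetersen_eq_prod_chebyshev hψ hk hn hw_map
  simpa [φ, Chebyshev.algebraMap_eval_T] using h

end SpanningTreeFormula

/-- If `w_1, w_2, w_3, w_4` are the roots (with multiplicity) of
`16X⁴ − 8X³ − 24X² − 1`, then
`τ(GP(n,4)) = (−1)^{n−1}·n·∏_{s=1}^{4}(T_n(w_s) − 1)/(w_s − 1)`. -/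
theorem spanning_trees_GP4 (n : ℕ) (hn : 9 ≤ n) (w : Fin 4 → ℂ)
    (hw : (C (16 : ℂ)) * X ^ 4 - C 8 * X ^ 3 - C 24 * X ^ 2 - C 1 =
      C (16 : ℂ) * ∏ s : Fin 4, (X - C (w s))) :
    (numSpanningTrees (genPetersen n 4) : ℂ) =
      (-1) ^ (n - 1) * n * ∏ s : Fin 4,
        ((Polynomial.Chebyshev.T ℂ n).eval (w s) - 1) / (w s - 1) := by
  have hfactor : (3 - 2 * X) * (3 - 2 * Chebyshev.T ℂ (4 : ℕ)) - 1 =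
      2 ^ (4 + 1) * (X - 1) * ∏ s : Fin 4, (X - C (w s)) := by
    rw [Nat.cast_ofNat, chebyshev_T_four]
    simp only [map_ofNat, C_1] at hw
    linear_combination 2 * (X - 1) * hw
  have hsign : (-1 : ℂ) ^ ((4 + 1) * (n - 1)) = (-1) ^ (n - 1) := by
    rw [pow_mul]
    norm_num
  rw [spanning_trees_GP4_general n 4 (by norm_num) (by omega) w hfactor, hsign]
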